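/- arXiv:2402.14620 — 2 statements merged into one kernel-verified Lean document; each statement's English description precedes it below -/
import Mathlib

section
/- Let r ≥ 2 be an integer and let ε ≥ 0 be a real. If Π = (A_1, …, A_r) is a partition of [n] into r parts with max_i |A_i| = n/r + εn, then the number of unordered pairs of vertices of [n] whose two elements lie in different parts of Π satisfies |ext(Π)| ≤ (1 − 1/r − rε²/(r−1))·C(n,2) + n/2. -/
open scoped Classical

noncomputable section

/-- The possible edges of a graph on vertex set `Fin n`. -/
abbrev EdgeType (n : ℕ) := {e : Sym2 (Fin n) // ¬ e.IsDiag}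

/-- `ext(Π)` for the partition of `Fin n` given by `φ`: the unordered pairs of distinct
vertices whose two elements lie in different parts. -/
def extPairs {n r : ℕ} (φ : Fin n → Fin r) : Finset (EdgeType n) :=
  Finset.univ.filter fun e => ¬ (Sym2.map φ (e : Sym2 (Fin n))).IsDiag

/-!
Counting ordered pairs of vertices by the parts of their elements gives
`2 |ext(Π)| + ∑ⱼ |Aⱼ|² = n²`, so an upper bound on `|ext(Π)|` is a lower bound on `∑ⱼ |Aⱼ|²`.
The deviations `dⱼ = |Aⱼ| - n/r` sum to zero, so `∑ⱼ |Aⱼ|² = n²/r + ∑ⱼ dⱼ²`. If `dᵢ = εn`, the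
other `r - 1` deviations sum to `-εn`, and by Cauchy–Schwarz `∑ⱼ dⱼ² ≥ r/(r-1) · (εn)²`.
Hence `|ext(Π)| ≤ (1 - 1/r - rε²/(r-1)) · n²/2`, where `n²/2 = C(n,2) + n/2`.
-/

section SumOfSquares

variable {ι : Type*} {s : Finset ι} {i : ι}

lemma card_mul_sq_le_card_sub_one_mul_sum_sq {R : Type*} [CommRing R] [LinearOrder R]
    [IsStrictOrderedRing R] {d : ι → R} (hi : i ∈ s) (hd : ∑ j ∈ s, d j = 0) :
    (s.card : R) * d i ^ 2 ≤ (s.card - 1) * ∑ j ∈ s, d j ^ 2 := by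
  have sum_others : ∑ j ∈ s.erase i, d j = -d i := by
    linarith [Finset.add_sum_erase s d hi]
  have cauchy_schwarz : d i ^ 2 ≤ (s.card - 1) * ∑ j ∈ s.erase i, d j ^ 2 := by
    simpa only [sum_others, neg_sq, Finset.cast_card_erase_of_mem hi]
      using sq_sum_le_card_mul_sum_sq (s := s.erase i) (f := d)
  rw [← Finset.add_sum_erase s (d · ^ 2) hi]
  linarith

lemma sum_sub_mean_sq {K : Type*} [Field K] [CharZero K] (s : Finset ι) (a : ι → K) :
    ∑ j ∈ s, (a j - (∑ k ∈ s, a k) / s.card) ^ 2 =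
      ∑ j ∈ s, a j ^ 2 - (∑ j ∈ s, a j) ^ 2 / s.card := by
  obtain rfl | hs := s.eq_empty_or_nonempty
  · simp
  have hcard : (s.card : K) ≠ 0 := Nat.cast_ne_zero.2 hs.card_ne_zero
  simp only [sub_sq, Finset.sum_add_distrib, Finset.sum_sub_distrib, ← Finset.sum_mul,
    ← Finset.mul_sum, Finset.sum_const, nsmul_eq_mul]
  field_simp
  ring

lemma sq_sum_div_card_add_le_sum_sq {K : Type*} [Field K] [LinearOrder K] [IsStrictOrderedRing K]
    (hs : 1 < s.card) (hi : i ∈ s) (a : ι → K) :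
    (∑ j ∈ s, a j) ^ 2 / s.card
        + s.card * (a i - (∑ j ∈ s, a j) / s.card) ^ 2 / (s.card - 1) ≤
      ∑ j ∈ s, a j ^ 2 := by
  have hcard : (s.card : K) ≠ 0 := by exact_mod_cast (Nat.zero_lt_of_lt hs).ne'
  have hcard_sub_one : (0 : K) < s.card - 1 := sub_pos.2 (by exact_mod_cast hs)
  have sum_deviations : ∑ j ∈ s, (a j - (∑ k ∈ s, a k) / s.card) = 0 := by
    rw [Finset.sum_sub_distrib, Finset.sum_const, nsmul_eq_mul, mul_div_cancel₀ _ hcard, sub_self]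
  have deviation_le := card_mul_sq_le_card_sub_one_mul_sum_sq hi sum_deviations
  rw [sum_sub_mean_sq, ← div_le_iff₀' hcard_sub_one] at deviation_le
  linarith

end SumOfSquares

lemma mul_sq_div_two_le_mul_choose_two_add {K : Type*} [Field K] [LinearOrder K]
    [IsStrictOrderedRing K] {c : K} (hc : c ≤ 1) (n : ℕ) :
    c * ((n : K) ^ 2 / 2) ≤ c * (n.choose 2 : K) + (n : K) / 2 :=
  calc c * ((n : K) ^ 2 / 2) = c * (n.choose 2 : K) + c * (n / 2) := by
        rw [Nat.cast_choose_two]; ring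
    _ ≤ c * (n.choose 2 : K) + n / 2 := by
        gcongr
        exact mul_le_of_le_one_left (by positivity) hc

section Multipartite

variable {V ι : Type*} [Fintype V] [Fintype ι] [DecidableEq ι]

lemma sum_card_fiber_sq (f : V → ι) :
    ∑ i, (Finset.univ.filter fun v => f v = i).card ^ 2 =
      (Finset.univ.filter fun p : V × V => f p.1 = f p.2).card := by
  rw [Finset.card_eq_sum_card_fiberwise (f := fun p => f p.1) (t := Finset.univ) (by simp)]
  refine Finset.sum_congr rfl fun i _ => ?_
  rw [sq, ← Finset.card_product]
  congr 1
  ext ⟨x, y⟩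
  simp only [Finset.mem_product, Finset.mem_filter, Finset.mem_univ, true_and]
  grind

lemma two_mul_card_edgeFinset_comap_top_add_sum_sq (f : V → ι) :
    2 * ((⊤ : SimpleGraph ι).comap f).edgeFinset.card
        + ∑ i, (Finset.univ.filter fun v => f v = i).card ^ 2 =
      Fintype.card V ^ 2 := by
  rw [SimpleGraph.two_mul_card_edgeFinset, sum_card_fiber_sq, add_comm, sq, ← Fintype.card_prod,
    ← Finset.card_univ]
  exact Finset.card_filter_add_card_filter_not fun p : V × V => f p.1 = f p.2

lemma card_edgeFinset_comap_top_le (f : V → ι) (hι : 2 ≤ Fintype.card ι) (ε : ℝ) (i : ι)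
    (hi : ((Finset.univ.filter fun v => f v = i).card : ℝ) =
      (Fintype.card V : ℝ) / Fintype.card ι + ε * Fintype.card V) :
    (((⊤ : SimpleGraph ι).comap f).edgeFinset.card : ℝ) ≤
      (1 - 1 / Fintype.card ι - Fintype.card ι * ε ^ 2 / (Fintype.card ι - 1))
        * ((Fintype.card V : ℝ) ^ 2 / 2) := by
  have sum_card : ∑ j, ((Finset.univ.filter fun v => f v = j).card : ℝ) = Fintype.card V := by
    exact_mod_cast (Finset.card_eq_sum_card_fiberwise (f := f) (s := Finset.univ)
      (t := Finset.univ) (by simp)).symm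
  have edges_add_squares : 2 * (((⊤ : SimpleGraph ι).comap f).edgeFinset.card : ℝ)
      + ∑ j, ((Finset.univ.filter fun v => f v = j).card : ℝ) ^ 2 = (Fintype.card V : ℝ) ^ 2 := by
    exact_mod_cast two_mul_card_edgeFinset_comap_top_add_sum_sq f
  have squares_ge := sq_sum_div_card_add_le_sum_sq (s := Finset.univ) hι (Finset.mem_univ i)
    fun j => ((Finset.univ.filter fun v => f v = j).card : ℝ)
  rw [sum_card, hi, Finset.card_univ, add_sub_cancel_left] at squares_ge
  linear_combination squares_ge / 2 + edges_add_squares / 2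

theorem ext_card_unbalanced_cut_general (f : V → ι) (hι : 2 ≤ Fintype.card ι) (ε : ℝ) (i : ι)
    (hi : ((Finset.univ.filter fun v => f v = i).card : ℝ) =
      (Fintype.card V : ℝ) / Fintype.card ι + ε * Fintype.card V) :
    (((⊤ : SimpleGraph ι).comap f).edgeFinset.card : ℝ) ≤
      (1 - 1 / Fintype.card ι - Fintype.card ι * ε ^ 2 / (Fintype.card ι - 1))
        * ((Fintype.card V).choose 2 : ℝ) + (Fintype.card V : ℝ) / 2 := by
  have hcard_sub_one : (0 : ℝ) ≤ Fintype.card ι - 1 :=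
    sub_nonneg.2 (by exact_mod_cast one_le_two.trans hι)
  have coeff_le_one : 1 - 1 / (Fintype.card ι : ℝ)
      - Fintype.card ι * ε ^ 2 / (Fintype.card ι - 1) ≤ 1 :=
    (sub_le_self _ (by positivity)).trans (sub_le_self _ (by positivity))
  exact (card_edgeFinset_comap_top_le f hι ε i hi).trans
    (mul_sq_div_two_le_mul_choose_two_add coeff_le_one _)

end Multipartite

lemma card_extPairs {n r : ℕ} (φ : Fin n → Fin r) :
    (extPairs φ).card = ((⊤ : SimpleGraph (Fin r)).comap φ).edgeFinset.card := by
  rw [← Finset.card_map (Function.Embedding.subtype _)]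
  congr 1
  ext e
  induction e using Sym2.ind with
  | _ x y => simpa [extPairs] using fun hφ hxy => hφ (congrArg φ hxy)

/-- If `Π` is a partition of `[n]` into `r` parts with largest part of size `n/r + εn`, then
`|ext(Π)| ≤ (1 - 1/r - rε²/(r-1)) C(n,2) + n/2`. -/
theorem ext_card_unbalanced_cut
    (n r : ℕ) (hr : 2 ≤ r) (ε : ℝ) (hε : 0 ≤ ε) (φ : Fin n → Fin r)
    (hmax : ∀ i : Fin r,
      ((Finset.univ.filter fun v : Fin n => φ v = i).card : ℝ) ≤ (n : ℝ) / r + ε * n)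
    (hattain : ∃ i : Fin r,
      ((Finset.univ.filter fun v : Fin n => φ v = i).card : ℝ) = (n : ℝ) / r + ε * n) :
    ((extPairs φ).card : ℝ) ≤
      (1 - 1 / r - r * ε ^ 2 / (r - 1)) * (n.choose 2 : ℝ) + (n : ℝ) / 2 := by
  obtain ⟨i, hi⟩ := hattain
  simpa only [card_extPairs, Fintype.card_fin] using
    ext_card_unbalanced_cut_general φ (by simpa) ε i (by simpa only [Fintype.card_fin] using hi)

end
end

section
/- Let G be a k-uniform hypergraph on a finite vertex set V, let t be a nonnegative integer, and let M := {R ⊆ V : G[R] is a matching with at most t edges}. Let p ∈ (0,1), let R ~ V_p be a p-random subset of V, and let R* := R ∖ ⋃G[R] (R with all vertices covered by edges of G inside R removed). Let A be any family of independent sets of G, let A : A → P(V) be any function, define q ∈ (0,1) by q/(1−q) = (p/(1−p))^k, and set a := max{|G[A(R*)]| : R* ∈ A}. Then Pr(R ∈ M and R* ∈ A and G[A(R*) ∩ R] = ∅) ≥ (1−q)^a · Pr(R ∈ M and R* ∈ A). -/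
open scoped Classical

noncomputable section

/-- Probability that the `p`-random subset of a finite type `V` (each element retained
independently with probability `p`) satisfies `A`. -/
def prSub (V : Type*) [Fintype V] (p : ℝ) (A : Finset V → Prop) : ℝ :=
  ∑ R ∈ Finset.univ.filter fun R : Finset V => A R,
    p ^ R.card * (1 - p) ^ (Fintype.card V - R.card)

/-- The subhypergraph of `G` induced by `R`: the edges of `G` entirely contained in `R`. -/
def inducedEdges {V : Type*} (G : Finset (Finset V)) (R : Finset V) : Finset (Finset V) :=
  G.filter fun e => e ⊆ R

/-- `R ∈ M`: the edges of `G` contained in `R` form a matching with at most `t` edges. -/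
def InM {V : Type*} (G : Finset (Finset V)) (t : ℕ) (R : Finset V) : Prop :=
  (∀ e ∈ inducedEdges G R, ∀ f ∈ inducedEdges G R, e ≠ f → Disjoint e f) ∧
    (inducedEdges G R).card ≤ t

/-- `R* = R ∖ ⋃ G[R]`. -/
def Rstar {V : Type*} [DecidableEq V] (G : Finset (Finset V)) (R : Finset V) : Finset V :=
  R \ (inducedEdges G R).sup id

/-!
Call an edge of `G[A(R*)]` that lies in `R` a hit, and erase from `R` the vertices of all its hits.
Since `G[R]` is a matching, this removes exactly the hits from `G[R]` and leaves `R*` unchanged, so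
the resulting set `S` has no hits and `R` is recovered from `S` and its set of hits, some subset of
`G[A(S*)]`. Putting back an edge `e` multiplies the probability of a set by
`(p / (1 - p)) ^ |e| = q / (1 - q)`, so the sets `R` erased to `S` have total probability at most
`Pr(S) * ∑ C ⊆ G[A(S*)], (q / (1 - q)) ^ |C| = Pr(S) * (1 - q) ^ (-|G[A(S*)]|)`.
-/

section InducedEdges

variable {V : Type*} {G C : Finset (Finset V)} {R S e : Finset V} {t : ℕ}

lemma mem_inducedEdges : e ∈ inducedEdges G R ↔ e ∈ G ∧ e ⊆ R :=
  Finset.mem_filter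

lemma InM.pairwiseDisjoint (hR : InM G t R) :
    (inducedEdges G R : Set (Finset V)).PairwiseDisjoint id :=
  fun e he f hf => hR.1 e he f hf

lemma InM.mono (hR : InM G t R) (h : inducedEdges G S ⊆ inducedEdges G R) : InM G t S :=
  ⟨fun e he f hf => hR.1 e (h he) f (h hf), (Finset.card_le_card h).trans hR.2⟩

variable [DecidableEq V]

lemma inducedEdges_inter : inducedEdges G (S ∩ R) = inducedEdges G S ∩ inducedEdges G R := by
  ext e
  simp only [mem_inducedEdges, Finset.mem_inter, Finset.subset_inter_iff]
  tauto

lemma sup_id_subset_of_subset_inducedEdges (hC : C ⊆ inducedEdges G R) : C.sup id ⊆ R :=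
  Finset.sup_le fun _ he => (mem_inducedEdges.1 (hC he)).2

lemma inducedEdges_sdiff_sup_id (hG : ∅ ∉ G)
    (hR : (inducedEdges G R : Set (Finset V)).PairwiseDisjoint id) (hC : C ⊆ inducedEdges G R) :
    inducedEdges G (R \ C.sup id) = inducedEdges G R \ C := by
  ext e
  simp only [mem_inducedEdges, Finset.mem_sdiff, Finset.subset_sdiff, Finset.disjoint_sup_right,
    id_eq]
  constructor
  · rintro ⟨heG, heR, hdisj⟩
    refine ⟨⟨heG, heR⟩, fun heC => hG ?_⟩
    rwa [← (Finset.disjoint_self_iff_empty e).1 (hdisj heC)]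
  · rintro ⟨⟨heG, heR⟩, heC⟩
    exact ⟨heG, heR, fun _ hf =>
      hR (mem_inducedEdges.2 ⟨heG, heR⟩) (hC hf) fun h => heC (h ▸ hf)⟩

lemma Rstar_sdiff_sup_id (hG : ∅ ∉ G)
    (hR : (inducedEdges G R : Set (Finset V)).PairwiseDisjoint id) (hC : C ⊆ inducedEdges G R) :
    Rstar G (R \ C.sup id) = Rstar G R := by
  rw [Rstar, Rstar, inducedEdges_sdiff_sup_id hG hR hC, sdiff_sdiff_left,
    ← Finset.sup_union, Finset.union_sdiff_of_subset hC]

end InducedEdges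

section SubsetWeight

variable {V : Type*} [Fintype V] {p : ℝ}

/-- The probability that the `p`-random subset of `V` is equal to `R`. -/
def subsetWeight (p : ℝ) (R : Finset V) : ℝ :=
  p ^ R.card * (1 - p) ^ (Fintype.card V - R.card)

lemma prSub_eq_sum_subsetWeight (E : Finset V → Prop) [DecidablePred E] :
    prSub V p E = ∑ R with E R, subsetWeight p R := by
  unfold prSub subsetWeight
  congr

lemma subsetWeight_nonneg (hp : p ∈ Set.Icc (0 : ℝ) 1) (R : Finset V) : 0 ≤ subsetWeight p R :=
  mul_nonneg (pow_nonneg hp.1 _) (pow_nonneg (sub_nonneg.2 hp.2) _)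

variable [DecidableEq V]

lemma subsetWeight_eq_sdiff_mul (hp : p ≠ 1) {R S : Finset V} (hS : S ⊆ R) :
    subsetWeight p R = subsetWeight p (R \ S) * (p / (1 - p)) ^ S.card := by
  have : 1 - p ≠ 0 := sub_ne_zero.2 hp.symm
  have hR : R.card = (R \ S).card + S.card := (Finset.card_sdiff_add_card_eq_card hS).symm
  have hcompl : Fintype.card V - (R \ S).card = Fintype.card V - R.card + S.card := by
    have := R.card_le_univ
    omega
  rw [subsetWeight, subsetWeight, hcompl, hR, pow_add, pow_add, div_pow]
  field_simp

lemma subsetWeight_eq_sdiff_sup_id_mul_prod (hp : p ≠ 1) {R : Finset V} {C : Finset (Finset V)}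
    (hC : (C : Set (Finset V)).PairwiseDisjoint id) (hCR : C.sup id ⊆ R) :
    subsetWeight p R = subsetWeight p (R \ C.sup id) * ∏ e ∈ C, (p / (1 - p)) ^ e.card := by
  have hcard : (C.sup id).card = ∑ e ∈ C, e.card := by
    rw [Finset.sup_eq_biUnion, Finset.card_biUnion hC]
    rfl
  rw [subsetWeight_eq_sdiff_mul hp hCR, hcard, Finset.prod_pow_eq_pow_sum]

end SubsetWeight

section HitEdges

variable {V : Type*} [DecidableEq V] {G : Finset (Finset V)} {A : Finset V → Finset V}
  {R S : Finset V} {t : ℕ}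

/-- The hits of `R`: the edges of `G[A(R*)]` that are contained in `R`. -/
def hitEdges (G : Finset (Finset V)) (A : Finset V → Finset V) (R : Finset V) :
    Finset (Finset V) :=
  inducedEdges G (A (Rstar G R) ∩ R)

/-- The set `R` with the vertices of all its hits removed, the representative of `R` among the
sets without hits. -/
def eraseHitEdges (G : Finset (Finset V)) (A : Finset V → Finset V) (R : Finset V) : Finset V :=
  R \ (hitEdges G A R).sup id

lemma hitEdges_eq_inter :
    hitEdges G A R = inducedEdges G (A (Rstar G R)) ∩ inducedEdges G R :=
  inducedEdges_inter

lemma hitEdges_subset_inducedEdges : hitEdges G A R ⊆ inducedEdges G R :=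
  hitEdges_eq_inter.trans_subset Finset.inter_subset_right

lemma sup_hitEdges_subset : (hitEdges G A R).sup id ⊆ R :=
  sup_id_subset_of_subset_inducedEdges hitEdges_subset_inducedEdges

lemma eraseHitEdges_union_sup_hitEdges :
    eraseHitEdges G A R ∪ (hitEdges G A R).sup id = R :=
  Finset.sdiff_union_of_subset sup_hitEdges_subset

lemma inducedEdges_eraseHitEdges (hG : ∅ ∉ G) (hR : InM G t R) :
    inducedEdges G (eraseHitEdges G A R) = inducedEdges G R \ hitEdges G A R :=
  inducedEdges_sdiff_sup_id hG hR.pairwiseDisjoint hitEdges_subset_inducedEdges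

lemma Rstar_eraseHitEdges (hG : ∅ ∉ G) (hR : InM G t R) :
    Rstar G (eraseHitEdges G A R) = Rstar G R :=
  Rstar_sdiff_sup_id hG hR.pairwiseDisjoint hitEdges_subset_inducedEdges

lemma InM.eraseHitEdges (hG : ∅ ∉ G) (hR : InM G t R) : InM G t (eraseHitEdges G A R) :=
  hR.mono <| (inducedEdges_eraseHitEdges hG hR).trans_subset Finset.sdiff_subset

lemma hitEdges_eraseHitEdges (hG : ∅ ∉ G) (hR : InM G t R) :
    hitEdges G A (eraseHitEdges G A R) = ∅ := by
  rw [hitEdges_eq_inter, Rstar_eraseHitEdges hG hR, inducedEdges_eraseHitEdges hG hR,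
    ← Finset.inter_sdiff_assoc, ← hitEdges_eq_inter, Finset.sdiff_self]

lemma hitEdges_subset_inducedEdges_Rstar_eraseHitEdges (hG : ∅ ∉ G) (hR : InM G t R) :
    hitEdges G A R ⊆ inducedEdges G (A (Rstar G (eraseHitEdges G A R))) := by
  rw [Rstar_eraseHitEdges hG hR, hitEdges_eq_inter]
  exact Finset.inter_subset_left

lemma eq_of_eraseHitEdges_eq_of_hitEdges_eq (herase : eraseHitEdges G A R = eraseHitEdges G A S)
    (hhit : hitEdges G A R = hitEdges G A S) : R = S := by
  rw [← eraseHitEdges_union_sup_hitEdges (G := G) (A := A) (R := R), herase, hhit,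
    eraseHitEdges_union_sup_hitEdges]

variable [Fintype V] {p : ℝ}

lemma subsetWeight_eq_eraseHitEdges_mul_prod (hp : p ≠ 1) (hR : InM G t R) :
    subsetWeight p R =
      subsetWeight p (eraseHitEdges G A R) * ∏ e ∈ hitEdges G A R, (p / (1 - p)) ^ e.card :=
  subsetWeight_eq_sdiff_sup_id_mul_prod hp
    (hR.pairwiseDisjoint.subset hitEdges_subset_inducedEdges) sup_hitEdges_subset

lemma sum_subsetWeight_fiber_eraseHitEdges_le (hp : p ∈ Set.Ico (0 : ℝ) 1) (hG : ∅ ∉ G)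
    {𝓡 : Finset (Finset V)} (h𝓡 : ∀ R ∈ 𝓡, InM G t R) (S : Finset V) :
    ∑ R ∈ 𝓡 with eraseHitEdges G A R = S, subsetWeight p R ≤
      subsetWeight p S *
        ∏ e ∈ inducedEdges G (A (Rstar G S)), (1 + (p / (1 - p)) ^ e.card) := by
  set 𝓕 := {R ∈ 𝓡 | eraseHitEdges G A R = S}
  have h𝓕 : ∀ R ∈ 𝓕, InM G t R ∧ eraseHitEdges G A R = S := fun R hR =>
    (Finset.mem_filter.1 hR).imp_left (h𝓡 R)
  have hodds : 0 ≤ p / (1 - p) := div_nonneg hp.1 (sub_nonneg.2 hp.2.le)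
  have hweight : ∀ R ∈ 𝓕, subsetWeight p R =
      subsetWeight p S * ∏ e ∈ hitEdges G A R, (p / (1 - p)) ^ e.card := fun R hR =>
    (h𝓕 R hR).2 ▸ subsetWeight_eq_eraseHitEdges_mul_prod hp.2.ne (h𝓕 R hR).1
  have hinj : Set.InjOn (hitEdges G A) 𝓕 := fun R hR R' hR' =>
    eq_of_eraseHitEdges_eq_of_hitEdges_eq ((h𝓕 R hR).2.trans (h𝓕 R' hR').2.symm)
  have himage : 𝓕.image (hitEdges G A) ⊆ (inducedEdges G (A (Rstar G S))).powerset :=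
    Finset.image_subset_iff.2 fun R hR => Finset.mem_powerset.2 <|
      (h𝓕 R hR).2 ▸ hitEdges_subset_inducedEdges_Rstar_eraseHitEdges hG (h𝓕 R hR).1
  rw [Finset.sum_congr rfl hweight, ← Finset.mul_sum, Finset.prod_one_add,
    ← Finset.sum_image (f := fun C => ∏ e ∈ C, (p / (1 - p)) ^ e.card) hinj]
  refine mul_le_mul_of_nonneg_left ?_ (subsetWeight_nonneg ⟨hp.1, hp.2.le⟩ S)
  exact Finset.sum_le_sum_of_subset_of_nonneg himage fun C _ _ =>
    Finset.prod_nonneg fun e _ => pow_nonneg hodds _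

end HitEdges

lemma one_sub_eq_inv_one_add_of_div_eq {q x : ℝ} (hx : x ≠ 0) (h : q / (1 - q) = x) :
    1 - q = (1 + x)⁻¹ := by
  have hq : 1 - q ≠ 0 := by
    intro hq
    exact hx (by rw [← h, hq, div_zero])
  refine eq_inv_of_mul_eq_one_left ?_
  rw [← h]
  field_simp
  ring

lemma prod_one_sub_eq_inv_prod_one_add {ι : Type*} {s : Finset ι} {q x : ι → ℝ}
    (hx : ∀ i ∈ s, x i ≠ 0) (hq : ∀ i ∈ s, q i / (1 - q i) = x i) :
    ∏ i ∈ s, (1 - q i) = (∏ i ∈ s, (1 + x i))⁻¹ := by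
  rw [← Finset.prod_inv_distrib]
  exact Finset.prod_congr rfl fun i hi => one_sub_eq_inv_one_add_of_div_eq (hx i hi) (hq i hi)

theorem matching_resample_general
    {V : Type*} [Fintype V] [DecidableEq V] (G : Finset (Finset V)) (t : ℕ)
    (p : ℝ) (hp : p ∈ Set.Ioo (0 : ℝ) 1)
    (𝒜 : Finset V → Prop) (h𝒜 : ∀ R', 𝒜 R' → ∅ ∉ G)
    (A : Finset V → Finset V)
    (q : Finset V → ℝ) (hq : ∀ e ∈ G, q e / (1 - q e) = (p / (1 - p)) ^ e.card)
    (c : ℝ) (hc : ∀ R', 𝒜 R' → c ≤ ∏ e ∈ inducedEdges G (A R'), (1 - q e)) :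
    c * prSub V p (fun R => InM G t R ∧ 𝒜 (Rstar G R)) ≤
      prSub V p (fun R =>
        InM G t R ∧ 𝒜 (Rstar G R) ∧ inducedEdges G (A (Rstar G R) ∩ R) = ∅) := by
  have hodds : 0 < p / (1 - p) := div_pos hp.1 (sub_pos.2 hp.2)
  have hmaps : ∀ R ∈ ({R | InM G t R ∧ 𝒜 (Rstar G R)} : Finset (Finset V)),
      eraseHitEdges G A R ∈ ({R | InM G t R ∧ 𝒜 (Rstar G R) ∧ hitEdges G A R = ∅} :
        Finset (Finset V)) := by
    intro R hR
    obtain ⟨hM, hR𝒜⟩ := (Finset.mem_filter_univ R).1 hR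
    have hG := h𝒜 _ hR𝒜
    exact (Finset.mem_filter_univ _).2 ⟨hM.eraseHitEdges hG,
      (Rstar_eraseHitEdges hG hM).symm ▸ hR𝒜, hitEdges_eraseHitEdges hG hM⟩
  rw [prSub_eq_sum_subsetWeight, prSub_eq_sum_subsetWeight,
    ← Finset.sum_fiberwise_of_maps_to hmaps, Finset.mul_sum]
  refine Finset.sum_le_sum fun S hS => ?_
  have hS𝒜 : 𝒜 (Rstar G S) := ((Finset.mem_filter_univ S).1 hS).2.1
  set fiberWeight := ∑ R ∈ {R | InM G t R ∧ 𝒜 (Rstar G R)} with eraseHitEdges G A R = S,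
    subsetWeight p R
  have hfiber_nonneg : 0 ≤ fiberWeight :=
    Finset.sum_nonneg fun R _ => subsetWeight_nonneg ⟨hp.1.le, hp.2.le⟩ R
  have hfiber_le : fiberWeight ≤ subsetWeight p S *
      ∏ e ∈ inducedEdges G (A (Rstar G S)), (1 + (p / (1 - p)) ^ e.card) :=
    sum_subsetWeight_fiber_eraseHitEdges_le ⟨hp.1.le, hp.2⟩ (h𝒜 _ hS𝒜)
      (fun R hR => ((Finset.mem_filter_univ R).1 hR).1) S
  calc c * fiberWeight
      ≤ (∏ e ∈ inducedEdges G (A (Rstar G S)), (1 - q e)) * fiberWeight :=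
        mul_le_mul_of_nonneg_right (hc _ hS𝒜) hfiber_nonneg
    _ ≤ subsetWeight p S := by
        rwa [prod_one_sub_eq_inv_prod_one_add (fun _ _ => (pow_pos hodds _).ne')
            fun e he => hq e (mem_inducedEdges.1 he).1,
          inv_mul_le_iff₀ (Finset.prod_pos fun e _ => by positivity), mul_comm]

/-- The resampling lemma: if `G` is a `k`-uniform hypergraph on `V`, `𝒜` is a family of
independent sets of `G`, `A : 𝒜 → P(V)`, `q/(1-q) = (p/(1-p))^k` and
`a = max{|G[A(R*)]| : R* ∈ 𝒜}`, then
`Pr(R ∈ M ∧ R* ∈ 𝒜 ∧ G[A(R*) ∩ R] = ∅) ≥ (1-q)^a Pr(R ∈ M ∧ R* ∈ 𝒜)`. -/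
theorem matching_resample
    {V : Type} [Fintype V] [DecidableEq V] (k : ℕ) (G : Finset (Finset V))
    (hG : ∀ e ∈ G, e.card = k) (t : ℕ)
    (p : ℝ) (hp : p ∈ Set.Ioo (0 : ℝ) 1)
    (𝒜 : Finset V → Prop) (h𝒜 : ∀ R', 𝒜 R' → ∀ e ∈ G, ¬ e ⊆ R')
    (A : Finset V → Finset V)
    (q : ℝ) (hq : q ∈ Set.Ioo (0 : ℝ) 1) (hqk : q / (1 - q) = (p / (1 - p)) ^ k) :
    (1 - q) ^
        ((Finset.univ.filter fun R' : Finset V => 𝒜 R').sup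
          fun R' => (inducedEdges G (A R')).card) *
        prSub V p (fun R => InM G t R ∧ 𝒜 (Rstar G R)) ≤
      prSub V p (fun R =>
        InM G t R ∧ 𝒜 (Rstar G R) ∧ inducedEdges G (A (Rstar G R) ∩ R) = ∅) := by
  refine matching_resample_general G t p hp 𝒜
    (fun R' hR' hG₀ => h𝒜 R' hR' ∅ hG₀ (Finset.empty_subset R')) A (fun _ => q)
    (fun e he => by rw [hG e he, hqk]) _ fun R' hR' => ?_
  rw [Finset.prod_const]
  exact pow_le_pow_of_le_one (sub_nonneg.2 hq.2.le) (sub_le_self 1 hq.1.le) <|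
    Finset.le_sup (f := fun R' => (inducedEdges G (A R')).card) ((Finset.mem_filter_univ R').2 hR')

end
end
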